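/- There is a non-split short exact sequence of barbell representations 0 → M(acb) → M(acbc⁻¹acb) → M(acb) → 0, and the Yoneda extension group Ext¹(M(acb), M(acb)) (equivalence classes of short exact sequences 0 → M(acb) → E → M(acb) → 0 with the Baer-sum ℂ-vector space structure) is one-dimensional over ℂ; consequently every non-split self-extension of M(acb) has middle term isomorphic to the string module M(acbc⁻¹acb). -/

import Mathlib

/-!
# Statement 11

Work over `ℂ`.  The barbell quiver has vertices `1` and `2`, a loop `a` at vertex `1`, a
loop `b` at vertex `2`, and an arrow `c : 1 → 2`; its potential is `W = a³ + b³`, whose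
Jacobian relations are `a² = 0` and `b² = 0`.  There is a non-split short exact sequence of
barbell representations `0 → M(acb) → M(acbc⁻¹acb) → M(acb) → 0`, and the Yoneda extension
group `Ext¹(M(acb), M(acb))` (equivalence classes of short exact sequences
`0 → M(acb) → E → M(acb) → 0` with the Baer-sum `ℂ`-vector space structure) is
one-dimensional over `ℂ`; consequently every non-split self-extension of `M(acb)` has middle
term isomorphic to the string module `M(acbc⁻¹acb)`.

Here `M(acb) = Mstring 0` and `M(acbc⁻¹acb) = Mstring 1`.  One-dimensionality of the Yoneda
`Ext¹` is expressed without constructing the Baer-sum structure: a class is nonzero iff its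
short exact sequences are non-split, and for `λ ≠ 0` the class `λ·[ξ₁]` is represented by
`(E₁, i₁ ∘ (λ⁻¹ • id), p₁)`; hence `[ξ₂] = λ·[ξ₁]` iff there is an isomorphism
`e : E₁ ≅ E₂` of representations with `e ∘ i₁ = i₂ ∘ (λ • id)` and `p₂ ∘ e = p₁`.  A vector
space is one-dimensional iff it has a nonzero vector and any two nonzero vectors are
proportional by a nonzero scalar.
-/

noncomputable section
open Module

/-- A representation of the barbell quiver with potential `W = a³ + b³`: finite-dimensional
`ℂ`-vector spaces `V1, V2` and linear maps `fa : V1 → V1`, `fb : V2 → V2`, `fc : V1 → V2`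
satisfying the Jacobian relations `fa ∘ fa = 0` and `fb ∘ fb = 0`. -/
structure BarbellRep where
  V1 : Type
  V2 : Type
  [acg1 : AddCommGroup V1]
  [acg2 : AddCommGroup V2]
  [mod1 : Module ℂ V1]
  [mod2 : Module ℂ V2]
  [fd1 : FiniteDimensional ℂ V1]
  [fd2 : FiniteDimensional ℂ V2]
  fa : V1 →ₗ[ℂ] V1
  fb : V2 →ₗ[ℂ] V2
  fc : V1 →ₗ[ℂ] V2
  rel_a : fa ∘ₗ fa = 0
  rel_b : fb ∘ₗ fb = 0

attribute [instance] BarbellRep.acg1 BarbellRep.acg2 BarbellRep.mod1 BarbellRep.mod2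
  BarbellRep.fd1 BarbellRep.fd2

namespace BarbellRep

/-- The dimension vector `(dim V1, dim V2)`. -/
def dimVec (M : BarbellRep) : ℕ × ℕ := (finrank ℂ M.V1, finrank ℂ M.V2)

/-- A subrepresentation: a pair of submodules closed under the structure maps. -/
structure Sub (M : BarbellRep) where
  S1 : Submodule ℂ M.V1
  S2 : Submodule ℂ M.V2
  mapsto_a : ∀ x ∈ S1, M.fa x ∈ S1
  mapsto_b : ∀ y ∈ S2, M.fb y ∈ S2
  mapsto_c : ∀ x ∈ S1, M.fc x ∈ S2

/-- The dimension vector of a subrepresentation. -/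
def Sub.dimVec {M : BarbellRep} (L : M.Sub) : ℕ × ℕ := (finrank ℂ L.S1, finrank ℂ L.S2)

/-- The subrepresentation is nonzero. -/
def Sub.Nonzero {M : BarbellRep} (L : M.Sub) : Prop := L.S1 ≠ ⊥ ∨ L.S2 ≠ ⊥

/-- The subrepresentation is proper. -/
def Sub.Proper {M : BarbellRep} (L : M.Sub) : Prop := L.S1 ≠ ⊤ ∨ L.S2 ≠ ⊤

end BarbellRep

/-- Isomorphism of barbell representations. -/
def RepIso (M N : BarbellRep) : Prop :=
  ∃ (e1 : M.V1 ≃ₗ[ℂ] N.V1) (e2 : M.V2 ≃ₗ[ℂ] N.V2),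
    (∀ x, e1 (M.fa x) = N.fa (e1 x)) ∧ (∀ y, e2 (M.fb y) = N.fb (e2 y)) ∧
      (∀ x, e2 (M.fc x) = N.fc (e1 x))

/-- Componentwise direct sum of barbell representations. -/
def dsum (M N : BarbellRep) : BarbellRep where
  V1 := M.V1 × N.V1
  V2 := M.V2 × N.V2
  fa := M.fa.prodMap N.fa
  fb := M.fb.prodMap N.fb
  fc := M.fc.prodMap N.fc
  rel_a := by
    apply LinearMap.ext
    rintro ⟨x, y⟩
    have h1 := LinearMap.congr_fun M.rel_a x
    have h2 := LinearMap.congr_fun N.rel_a y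
    simp only [LinearMap.comp_apply, LinearMap.prodMap_apply, LinearMap.zero_apply] at h1 h2 ⊢
    simp [h1, h2]
  rel_b := by
    apply LinearMap.ext
    rintro ⟨x, y⟩
    have h1 := LinearMap.congr_fun M.rel_b x
    have h2 := LinearMap.congr_fun N.rel_b y
    simp only [LinearMap.comp_apply, LinearMap.prodMap_apply, LinearMap.zero_apply] at h1 h2 ⊢
    simp [h1, h2]

/-- The zero representation. -/
def zeroRep : BarbellRep where
  V1 := Fin 0 → ℂ
  V2 := Fin 0 → ℂ
  fa := 0
  fb := 0
  fc := 0
  rel_a := by simp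
  rel_b := by simp

/-- Direct sum of a finite list of barbell representations. -/
def dsumList (l : List BarbellRep) : BarbellRep := l.foldr dsum zeroRep

/-! ## The string modules `M(acb(c⁻¹acb)ⁿ)`

The walk `acb(c⁻¹acb)ⁿ` has length `4n + 3` and `4n + 4` vertex-instances `z₀, …, z_{4n+3}`,
where `z_{4k}, z_{4k+1}` lie at vertex `1` and `z_{4k+2}, z_{4k+3}` lie at vertex `2`
(`0 ≤ k ≤ n`).  We realise the string module with
`V1 = V2 = (Fin (n+1) × Bool) → ℂ`, where `(k, false)` indexes `z_{4k}` in `V1` (resp.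
`z_{4k+2}` in `V2`) and `(k, true)` indexes `z_{4k+1}` in `V1` (resp. `z_{4k+3}` in `V2`).
The structure maps of the string module are:
`f_a(z_{4k}) = z_{4k+1}`, `f_b(z_{4k+2}) = z_{4k+3}`, `f_c(z_{4k+1}) = z_{4k+2}` (letter `c`)
and `f_c(z_{4k+4}) = z_{4k+3}` (letter `c⁻¹`), all other basis vectors mapping to `0`. -/

/-- The map sending the basis vector indexed `(k, false)` to the one indexed `(k, true)`
and killing the others; this is `f_a` (and also `f_b`) of the string module. -/
def strFa (n : ℕ) : ((Fin (n + 1) × Bool) → ℂ) →ₗ[ℂ] ((Fin (n + 1) × Bool) → ℂ) where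
  toFun v p := if p.2 then v (p.1, false) else 0
  map_add' u v := by
    funext p
    by_cases h : p.2 <;> simp [h]
  map_smul' c v := by
    funext p
    by_cases h : p.2 <;> simp [h]

/-- The map `f_c` of the string module `M(acb(c⁻¹acb)ⁿ)`:
`f_c(z_{4k+1}) = z_{4k+2}` and `f_c(z_{4k+4}) = z_{4k+3}`, i.e. the coefficient of the output
at `z_{4k+2}` is the input coefficient at `z_{4k+1}`, and the coefficient of the output at
`z_{4k+3}` is the input coefficient at `z_{4k+4}` (when `k + 1 ≤ n`). -/
def strFc (n : ℕ) : ((Fin (n + 1) × Bool) → ℂ) →ₗ[ℂ] ((Fin (n + 1) × Bool) → ℂ) where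
  toFun v p :=
    if p.2 then
      (if h : (p.1 : ℕ) + 1 < n + 1 then v (⟨(p.1 : ℕ) + 1, h⟩, false) else 0)
    else v (p.1, true)
  map_add' u v := by
    funext p
    by_cases h : p.2
    · simp only [h, if_true, Pi.add_apply]
      split <;> simp
    · simp [h]
  map_smul' c v := by
    funext p
    by_cases h : p.2
    · simp only [h, if_true, Pi.smul_apply, RingHom.id_apply]
      split <;> simp
    · simp [h]

/-- The string module `M(acb(c⁻¹acb)ⁿ)`. -/
def Mstring (n : ℕ) : BarbellRep where
  V1 := (Fin (n + 1) × Bool) → ℂ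
  V2 := (Fin (n + 1) × Bool) → ℂ
  fa := strFa n
  fb := strFa n
  fc := strFc n
  rel_a := by
    apply LinearMap.ext
    intro v
    funext p
    by_cases h : p.2 <;> simp [strFa, h]
  rel_b := by
    apply LinearMap.ext
    intro v
    funext p
    by_cases h : p.2 <;> simp [strFa, h]

/-- A morphism of barbell representations: a pair of linear maps commuting with the
structure maps. -/
structure BHom (M N : BarbellRep) where
  g1 : M.V1 →ₗ[ℂ] N.V1
  g2 : M.V2 →ₗ[ℂ] N.V2
  comm_a : ∀ x, g1 (M.fa x) = N.fa (g1 x)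
  comm_b : ∀ y, g2 (M.fb y) = N.fb (g2 y)
  comm_c : ∀ x, g2 (M.fc x) = N.fc (g1 x)

/-- A (componentwise) short exact sequence `0 → Y → E → X → 0` of barbell
representations. -/
structure BSES (Y X : BarbellRep) where
  E : BarbellRep
  i : BHom Y E
  p : BHom E X
  inj1 : Function.Injective i.g1
  inj2 : Function.Injective i.g2
  surj1 : Function.Surjective p.g1
  surj2 : Function.Surjective p.g2
  exact1 : LinearMap.range i.g1 = LinearMap.ker p.g1
  exact2 : LinearMap.range i.g2 = LinearMap.ker p.g2

/-- A short exact sequence `0 → Y → E → X → 0` splits if the projection `p` admits a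
section which is a morphism of representations. -/
def BSES.IsSplit {Y X : BarbellRep} (ξ : BSES Y X) : Prop :=
  ∃ s : BHom X ξ.E, (∀ x, ξ.p.g1 (s.g1 x) = x) ∧ (∀ y, ξ.p.g2 (s.g2 y) = y)

/-- `ScaledEquiv lam ξ₁ ξ₂` says that the Yoneda class of `ξ₂` equals `lam` times the
Yoneda class of `ξ₁`: there is an isomorphism of representations `e : E₁ ≅ E₂` such that
`e(i₁ y) = i₂ (lam • y)` and `p₂ ∘ e = p₁`. -/
def ScaledEquiv {Y X : BarbellRep} (lam : ℂ) (ξ₁ ξ₂ : BSES Y X) : Prop :=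
  ∃ (e1 : ξ₁.E.V1 ≃ₗ[ℂ] ξ₂.E.V1) (e2 : ξ₁.E.V2 ≃ₗ[ℂ] ξ₂.E.V2),
    (∀ x, e1 (ξ₁.E.fa x) = ξ₂.E.fa (e1 x)) ∧
    (∀ y, e2 (ξ₁.E.fb y) = ξ₂.E.fb (e2 y)) ∧
    (∀ x, e2 (ξ₁.E.fc x) = ξ₂.E.fc (e1 x)) ∧
    (∀ y, e1 (ξ₁.i.g1 y) = ξ₂.i.g1 (lam • y)) ∧
    (∀ y, e2 (ξ₁.i.g2 y) = ξ₂.i.g2 (lam • y)) ∧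
    (∀ v, ξ₂.p.g1 (e1 v) = ξ₁.p.g1 v) ∧
    (∀ v, ξ₂.p.g2 (e2 v) = ξ₁.p.g2 v)

/-- The Yoneda extension group `Ext¹(X, Y)` (equivalence classes of short exact sequences
`0 → Y → E → X → 0` with the Baer-sum `ℂ`-vector space structure) is one-dimensional over
`ℂ`: there is a nonzero class (a non-split sequence), and any two nonzero classes are
proportional by a nonzero scalar. -/
def ExtOneDimensional (X Y : BarbellRep) : Prop :=
  (∃ ξ : BSES Y X, ¬ ξ.IsSplit) ∧
    ∀ ξ₁ ξ₂ : BSES Y X, ¬ ξ₁.IsSplit → ¬ ξ₂.IsSplit →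
      ∃ lam : ℂ, lam ≠ 0 ∧ ScaledEquiv lam ξ₁ ξ₂

/-!
The string module `M(acb(c⁻¹acb)ᵐ)` is presented by the generators `z₀, z₄, …, z₄ₘ` at vertex `1`
with the relations `c z₀ = 0` and `c z₄ₖ₊₄ = bca z₄ₖ`. Given `0 → M(acb(c⁻¹acb)ᵐ) → E → M(acb) → 0`,
lift the generator of the quotient to `u ∈ E`. Then `c u` lies in the submodule; since vertex `2` of
the submodule is spanned by the image of `c` and by `bca z₄ₘ`, a change of lift makes
`c u = β • bca z₄ₘ`. If `β = 0`, then `u` satisfies the relation of `M(acb)`, so the sequence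
splits. Otherwise `β z₀, …, β z₄ₘ, u` satisfy the relations of `M(acb(c⁻¹acb)ᵐ⁺¹)`, which gives a
morphism from the standard extension scaling the submodule by `β` and fixing the quotient; it is an
isomorphism by the short five lemma.
-/

attribute [ext] BHom

namespace BarbellRep

/-- The action `f_b ∘ f_c ∘ f_a` of the path `acb`. -/
def facb (M : BarbellRep) : M.V1 →ₗ[ℂ] M.V2 := M.fb ∘ₗ M.fc ∘ₗ M.fa

lemma facb_apply (M : BarbellRep) (x : M.V1) : M.facb x = M.fb (M.fc (M.fa x)) := rfl

lemma fa_fa (M : BarbellRep) (x : M.V1) : M.fa (M.fa x) = 0 := LinearMap.congr_fun M.rel_a x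

lemma fb_fb (M : BarbellRep) (y : M.V2) : M.fb (M.fb y) = 0 := LinearMap.congr_fun M.rel_b y

end BarbellRep

namespace BHom

variable {L M N : BarbellRep}

/-- The identity morphism. -/
def id (M : BarbellRep) : BHom M M where
  g1 := LinearMap.id
  g2 := LinearMap.id
  comm_a _ := rfl
  comm_b _ := rfl
  comm_c _ := rfl

/-- Composition of morphisms, `f` after `g`. -/
def comp (f : BHom M N) (g : BHom L M) : BHom L N where
  g1 := f.g1 ∘ₗ g.g1
  g2 := f.g2 ∘ₗ g.g2
  comm_a x := by simp only [LinearMap.comp_apply, g.comm_a, f.comm_a]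
  comm_b y := by simp only [LinearMap.comp_apply, g.comm_b, f.comm_b]
  comm_c x := by simp only [LinearMap.comp_apply, g.comm_c, f.comm_c]

/-- Scalar multiples of a morphism, used to scale the inclusion of an extension. -/
instance : SMul ℂ (BHom M N) where
  smul r f :=
    { g1 := r • f.g1
      g2 := r • f.g2
      comm_a := fun x => by simp only [LinearMap.smul_apply, f.comm_a, map_smul]
      comm_b := fun y => by simp only [LinearMap.smul_apply, f.comm_b, map_smul]
      comm_c := fun x => by simp only [LinearMap.smul_apply, f.comm_c, map_smul] }

lemma smul_g1_apply (r : ℂ) (f : BHom M N) (x : M.V1) : (r • f).g1 x = r • f.g1 x := rfl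

lemma smul_g2_apply (r : ℂ) (f : BHom M N) (y : M.V2) : (r • f).g2 y = r • f.g2 y := rfl

lemma comm_facb (f : BHom M N) (x : M.V1) : f.g2 (M.facb x) = N.facb (f.g1 x) := by
  simp only [BarbellRep.facb_apply, f.comm_a, f.comm_b, f.comm_c]

end BHom

section LinearAlgebra

variable {R A₁ B₁ C₁ A₂ B₂ C₂ : Type*} [CommRing R]
  [AddCommGroup A₁] [AddCommGroup B₁] [AddCommGroup C₁]
  [AddCommGroup A₂] [AddCommGroup B₂] [AddCommGroup C₂]
  [Module R A₁] [Module R B₁] [Module R C₁] [Module R A₂] [Module R B₂] [Module R C₂]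
  {i₁ : A₁ →ₗ[R] B₁} {p₁ : B₁ →ₗ[R] C₁} {i₂ : A₂ →ₗ[R] B₂} {p₂ : B₂ →ₗ[R] C₂}
  {α : A₁ →ₗ[R] A₂} {β : B₁ →ₗ[R] B₂} {γ : C₁ →ₗ[R] C₂}

lemma bijective_of_shortExact (hp₁ : Function.Surjective p₁) (hi₂ : Function.Injective i₂)
    (h₁ : LinearMap.range i₁ = LinearMap.ker p₁) (h₂ : LinearMap.range i₂ = LinearMap.ker p₂)
    (hi : i₂ ∘ₗ α = β ∘ₗ i₁) (hp : p₂ ∘ₗ β = γ ∘ₗ p₁)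
    (hα : Function.Bijective α) (hγ : Function.Bijective γ) : Function.Bijective β := by
  have hi₁ : Function.Injective i₁ := .of_comp (f := β) <| by
    rw [← LinearMap.coe_comp, ← hi]
    exact hi₂.comp hα.injective
  have hp₂ : Function.Surjective p₂ := .of_comp (g := β) <| by
    rw [← LinearMap.coe_comp, hp]
    exact hγ.surjective.comp hp₁
  have bijective_zero : Function.Bijective (0 : Unit →ₗ[R] Unit) := Function.bijective_id
  exact LinearMap.bijective_of_surjective_of_bijective_of_bijective_of_injective
    (0 : Unit →ₗ[R] A₁) i₁ p₁ (0 : C₁ →ₗ[R] Unit) (0 : Unit →ₗ[R] A₂) i₂ p₂ (0 : C₂ →ₗ[R] Unit)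
    0 α β γ 0 (by simp) hi hp (by simp)
    ((LinearMap.exact_zero_iff_injective _ _).2 hi₁) (LinearMap.exact_iff.2 h₁.symm)
    ((LinearMap.exact_zero_iff_surjective _ _).2 hp₁)
    ((LinearMap.exact_zero_iff_injective _ _).2 hi₂) (LinearMap.exact_iff.2 h₂.symm)
    ((LinearMap.exact_zero_iff_surjective _ _).2 hp₂)
    bijective_zero.surjective hα hγ bijective_zero.injective

lemma apply_apply_eq_of_basis {R ι V W W' U : Type*} [Semiring R]
    [AddCommMonoid V] [AddCommMonoid W] [AddCommMonoid W'] [AddCommMonoid U]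
    [Module R V] [Module R W] [Module R W'] [Module R U]
    {f : V →ₗ[R] W} {g : W →ₗ[R] U} {h : V →ₗ[R] W'} {k : W' →ₗ[R] U}
    (b : Basis ι R V) (H : ∀ i, g (f (b i)) = k (h (b i))) (x : V) : g (f x) = k (h x) :=
  LinearMap.congr_fun (f := g ∘ₗ f) (g := k ∘ₗ h) (b.ext H) x

lemma range_extendByZero_eq_ker_funLeft {R ι κ τ : Type*} [Semiring R] {e : ι → τ} {f : κ → τ}
    (he : Function.Injective e) (hf : Set.range f = (Set.range e)ᶜ) :
    LinearMap.range (Function.ExtendByZero.linearMap R e) =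
      LinearMap.ker (LinearMap.funLeft R R f) := by
  ext v
  constructor
  · rintro ⟨y, rfl⟩
    funext k
    exact Function.extend_apply' y (0 : τ → R) (f k) (hf.subset (Set.mem_range_self k))
  · intro hv
    refine ⟨v ∘ e, funext fun t => ?_⟩
    by_cases ht : t ∈ Set.range e
    · obtain ⟨s, rfl⟩ := ht
      exact he.extend_apply _ _ s
    · obtain ⟨k, rfl⟩ : t ∈ Set.range f := hf.superset ht
      exact (Function.extend_apply' (v ∘ e) (0 : τ → R) (f k) ht).trans (congrFun hv k).symm

end LinearAlgebra

namespace BSES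

variable {X Y : BarbellRep}

lemma p_i_g1 (ξ : BSES Y X) (y : Y.V1) : ξ.p.g1 (ξ.i.g1 y) = 0 :=
  LinearMap.mem_ker.1 (ξ.exact1 ▸ LinearMap.mem_range_self ξ.i.g1 y)

end BSES

namespace ScaledEquiv

variable {X Y : BarbellRep} {ξ₁ ξ₂ ξ₃ : BSES Y X} {α β : ℂ}

lemma of_hom (hβ : β ≠ 0) (G : BHom ξ₁.E ξ₂.E) (hi : G.comp ξ₁.i = β • ξ₂.i)
    (hp : ξ₂.p.comp G = ξ₁.p) : ScaledEquiv β ξ₁ ξ₂ := by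
  have hi1 : G.g1 ∘ₗ ξ₁.i.g1 = β • ξ₂.i.g1 := congrArg BHom.g1 hi
  have hi2 : G.g2 ∘ₗ ξ₁.i.g2 = β • ξ₂.i.g2 := congrArg BHom.g2 hi
  have hp1 : ξ₂.p.g1 ∘ₗ G.g1 = ξ₁.p.g1 := congrArg BHom.g1 hp
  have hp2 : ξ₂.p.g2 ∘ₗ G.g2 = ξ₁.p.g2 := congrArg BHom.g2 hp
  have bij1 : Function.Bijective G.g1 :=
    bijective_of_shortExact ξ₁.surj1 ξ₂.inj1 ξ₁.exact1 ξ₂.exact1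
      (α := β • LinearMap.id) (γ := LinearMap.id)
      (by rw [hi1, LinearMap.comp_smul, LinearMap.comp_id]) hp1
      (LinearEquiv.smulOfNeZero ℂ Y.V1 β hβ).bijective Function.bijective_id
  have bij2 : Function.Bijective G.g2 :=
    bijective_of_shortExact ξ₁.surj2 ξ₂.inj2 ξ₁.exact2 ξ₂.exact2
      (α := β • LinearMap.id) (γ := LinearMap.id)
      (by rw [hi2, LinearMap.comp_smul, LinearMap.comp_id]) hp2
      (LinearEquiv.smulOfNeZero ℂ Y.V2 β hβ).bijective Function.bijective_id
  exact ⟨.ofBijective G.g1 bij1, .ofBijective G.g2 bij2, G.comm_a, G.comm_b, G.comm_c,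
    fun y => (LinearMap.congr_fun hi1 y).trans (map_smul ξ₂.i.g1 β y).symm,
    fun y => (LinearMap.congr_fun hi2 y).trans (map_smul ξ₂.i.g2 β y).symm,
    LinearMap.congr_fun hp1, LinearMap.congr_fun hp2⟩

lemma symm (hα : α ≠ 0) (h : ScaledEquiv α ξ₁ ξ₂) : ScaledEquiv α⁻¹ ξ₂ ξ₁ := by
  obtain ⟨e1, e2, ha, hb, hc, hi1, hi2, hp1, hp2⟩ := h
  refine ⟨e1.symm, e2.symm, fun x => ?_, fun y => ?_, fun x => ?_, fun y => ?_, fun y => ?_,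
    fun v => ?_, fun v => ?_⟩
  · rw [e1.symm_apply_eq, ha, e1.apply_symm_apply]
  · rw [e2.symm_apply_eq, hb, e2.apply_symm_apply]
  · rw [e2.symm_apply_eq, hc, e1.apply_symm_apply]
  · rw [e1.symm_apply_eq, hi1, smul_inv_smul₀ hα]
  · rw [e2.symm_apply_eq, hi2, smul_inv_smul₀ hα]
  · rw [← hp1, e1.apply_symm_apply]
  · rw [← hp2, e2.apply_symm_apply]

lemma trans (h : ScaledEquiv α ξ₁ ξ₂) (h' : ScaledEquiv β ξ₂ ξ₃) :
    ScaledEquiv (α * β) ξ₁ ξ₃ := by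
  obtain ⟨e1, e2, ha, hb, hc, hi1, hi2, hp1, hp2⟩ := h
  obtain ⟨f1, f2, ha', hb', hc', hi1', hi2', hp1', hp2'⟩ := h'
  refine ⟨e1.trans f1, e2.trans f2, fun x => ?_, fun y => ?_, fun x => ?_, fun y => ?_,
    fun y => ?_, fun v => ?_, fun v => ?_⟩ <;> simp only [LinearEquiv.trans_apply]
  · rw [ha, ha']
  · rw [hb, hb']
  · rw [hc, hc']
  · rw [hi1, hi1', smul_smul, mul_comm]
  · rw [hi2, hi2', smul_smul, mul_comm]
  · rw [hp1', hp1]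
  · rw [hp2', hp2]

lemma repIso (h : ScaledEquiv α ξ₁ ξ₂) : RepIso ξ₁.E ξ₂.E := by
  obtain ⟨e1, e2, ha, hb, hc, -⟩ := h
  exact ⟨e1, e2, ha, hb, hc⟩

end ScaledEquiv

/-- The relations that `M(acb(c⁻¹acb)ⁿ)` imposes on its generators `z₀, z₄, …, z₄ₙ`, for
arbitrary vectors `u₀, …, uₙ` at vertex `1` of a representation. -/
structure IsStringSeq {N : BarbellRep} {n : ℕ} (u : Fin (n + 1) → N.V1) : Prop where
  fc_zero : N.fc (u 0) = 0
  fc_succ : ∀ j : Fin n, N.fc (u j.succ) = N.facb (u j.castSucc)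

namespace IsStringSeq

variable {M N : BarbellRep} {n : ℕ} {u : Fin (n + 1) → M.V1}

lemma map (hu : IsStringSeq u) (f : BHom M N) : IsStringSeq (f.g1 ∘ u) where
  fc_zero := by rw [Function.comp_apply, ← f.comm_c, hu.fc_zero, map_zero]
  fc_succ j := by
    simp only [Function.comp_apply, ← f.comm_c, hu.fc_succ, f.comm_facb]

lemma snoc (hu : IsStringSeq u) {v : M.V1} (hv : M.fc v = M.facb (u (Fin.last n))) :
    IsStringSeq (n := n + 1) (Fin.snoc (α := fun _ => M.V1) u v) where
  fc_zero := by rw [← Fin.castSucc_zero, Fin.snoc_castSucc, hu.fc_zero]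
  fc_succ j := by
    rw [Fin.snoc_castSucc]
    cases j using Fin.lastCases with
    | last => rw [Fin.succ_last, Fin.snoc_last, hv]
    | cast j => rw [Fin.succ_castSucc, Fin.snoc_castSucc, hu.fc_succ]

end IsStringSeq

section StructureMaps

variable {n : ℕ}

lemma strFc_castSucc_true (v : Fin (n + 1) × Bool → ℂ) (j : Fin n) :
    strFc n v (j.castSucc, true) = v (j.succ, false) := by
  simp [strFc, Fin.succ]

lemma strFc_last_true (v : Fin (n + 1) × Bool → ℂ) : strFc n v (Fin.last n, true) = 0 := by
  simp [strFc]

lemma strFa_single_false (k : Fin (n + 1)) :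
    strFa n (Pi.single (k, false) 1) = Pi.single (k, true) 1 := by
  funext ⟨j, b⟩
  cases b <;> simp [strFa, Pi.single_apply]

lemma strFc_single_true (k : Fin (n + 1)) :
    strFc n (Pi.single (k, true) 1) = Pi.single (k, false) 1 := by
  funext ⟨j, b⟩
  cases b <;> simp [strFc, Pi.single_apply]

lemma strFc_single_zero : strFc n (Pi.single (0, false) 1) = 0 := by
  funext ⟨j, b⟩
  cases b
  · simp [strFc]
  · cases j using Fin.lastCases with
    | last => exact strFc_last_true _
    | cast j => simp [strFc_castSucc_true]

lemma strFc_single_succ (i : Fin n) :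
    strFc n (Pi.single (i.succ, false) 1) = Pi.single (i.castSucc, true) 1 := by
  funext ⟨j, b⟩
  cases b
  · simp [strFc]
  · cases j using Fin.lastCases with
    | last => simp [strFc_last_true, (Fin.castSucc_ne_last i).symm]
    | cast j => simp [strFc_castSucc_true, Pi.single_apply]

end StructureMaps

namespace Mstring

variable {n : ℕ} {N : BarbellRep}

/-- The basis `z₄ₖ = basis₁ (k, false)`, `z₄ₖ₊₁ = basis₁ (k, true)` of the string module at
vertex `1`. -/
def basis₁ : Basis (Fin (n + 1) × Bool) ℂ (Mstring n).V1 := Pi.basisFun ℂ _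

/-- The basis `z₄ₖ₊₂ = basis₂ (k, false)`, `z₄ₖ₊₃ = basis₂ (k, true)` of the string module at
vertex `2`. -/
def basis₂ : Basis (Fin (n + 1) × Bool) ℂ (Mstring n).V2 := Pi.basisFun ℂ _

lemma basis₁_eq_single (p : Fin (n + 1) × Bool) :
    basis₁ p = (Pi.single p 1 : Fin (n + 1) × Bool → ℂ) :=
  Pi.basisFun_apply ..

lemma basis₂_eq_single (p : Fin (n + 1) × Bool) :
    basis₂ p = (Pi.single p 1 : Fin (n + 1) × Bool → ℂ) :=
  Pi.basisFun_apply ..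

lemma fa_basis₁_false (k : Fin (n + 1)) :
    (Mstring n).fa (basis₁ (k, false)) = basis₁ (k, true) := by
  rw [basis₁_eq_single, basis₁_eq_single]
  exact strFa_single_false k

lemma fa_basis₁_true (k : Fin (n + 1)) : (Mstring n).fa (basis₁ (k, true)) = 0 := by
  rw [← fa_basis₁_false, BarbellRep.fa_fa]

lemma fb_basis₂_false (k : Fin (n + 1)) :
    (Mstring n).fb (basis₂ (k, false)) = basis₂ (k, true) :=
  fa_basis₁_false k

lemma fb_basis₂_true (k : Fin (n + 1)) : (Mstring n).fb (basis₂ (k, true)) = 0 :=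
  fa_basis₁_true k

lemma fc_basis₁_true (k : Fin (n + 1)) :
    (Mstring n).fc (basis₁ (k, true)) = basis₂ (k, false) := by
  rw [basis₁_eq_single, basis₂_eq_single]
  exact strFc_single_true k

lemma fc_basis₁_zero_false : (Mstring n).fc (basis₁ (0, false)) = 0 := by
  rw [basis₁_eq_single]
  exact strFc_single_zero

lemma fc_basis₁_succ_false (i : Fin n) :
    (Mstring n).fc (basis₁ (i.succ, false)) = basis₂ (i.castSucc, true) := by
  rw [basis₁_eq_single, basis₂_eq_single]
  exact strFc_single_succ i

/-- The generator `z₄ₖ` of `M(acb(c⁻¹acb)ⁿ)`. -/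
def gen (k : Fin (n + 1)) : (Mstring n).V1 := basis₁ (k, false)

lemma fa_gen (k : Fin (n + 1)) : (Mstring n).fa (gen k) = basis₁ (k, true) :=
  fa_basis₁_false k

lemma fc_fa_gen (k : Fin (n + 1)) :
    (Mstring n).fc ((Mstring n).fa (gen k)) = basis₂ (k, false) := by
  rw [fa_gen, fc_basis₁_true]

lemma facb_gen (k : Fin (n + 1)) : (Mstring n).facb (gen k) = basis₂ (k, true) := by
  rw [BarbellRep.facb_apply, fc_fa_gen, fb_basis₂_false]

lemma isStringSeq_gen : IsStringSeq (gen : Fin (n + 1) → (Mstring n).V1) where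
  fc_zero := fc_basis₁_zero_false
  fc_succ j := by rw [gen, fc_basis₁_succ_false, facb_gen]

/-- The universal property of `M(acb(c⁻¹acb)ⁿ)`: the morphism sending its generators to a
prescribed sequence of vectors subject to the string relations. -/
def lift (u : Fin (n + 1) → N.V1) (hu : IsStringSeq u) : BHom (Mstring n) N where
  g1 := basis₁.constr ℂ fun p => if p.2 then N.fa (u p.1) else u p.1
  g2 := basis₂.constr ℂ fun p => if p.2 then N.facb (u p.1) else N.fc (N.fa (u p.1))
  comm_a := apply_apply_eq_of_basis basis₁ fun ⟨k, b⟩ => by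
    cases b <;> simp only [fa_basis₁_false, fa_basis₁_true, Basis.constr_basis, N.fa_fa, map_zero,
      Bool.false_eq_true, if_true, if_false]
  comm_b := apply_apply_eq_of_basis basis₂ fun ⟨k, b⟩ => by
    cases b <;> simp only [fb_basis₂_false, fb_basis₂_true, Basis.constr_basis, N.facb_apply,
      N.fb_fb, map_zero, Bool.false_eq_true, if_true, if_false]
  comm_c := apply_apply_eq_of_basis basis₁ fun ⟨k, b⟩ => by
    cases b
    · cases k using Fin.cases with
      | zero =>
        simp only [fc_basis₁_zero_false, Basis.constr_basis, hu.fc_zero, map_zero,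
          Bool.false_eq_true, if_false]
      | succ j =>
        simp only [fc_basis₁_succ_false, Basis.constr_basis, hu.fc_succ,
          Bool.false_eq_true, if_true, if_false]
    · simp only [fc_basis₁_true, Basis.constr_basis, Bool.false_eq_true, if_true, if_false]

lemma lift_gen (u : Fin (n + 1) → N.V1) (hu : IsStringSeq u) (k : Fin (n + 1)) :
    (lift u hu).g1 (gen k) = u k :=
  basis₁.constr_basis ℂ _ (k, false)

lemma hom_ext {f g : BHom (Mstring n) N} (h : ∀ k, f.g1 (gen k) = g.g1 (gen k)) : f = g := by
  ext : 1
  · refine basis₁.ext fun ⟨k, b⟩ => ?_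
    cases b
    · exact h k
    · rw [← fa_gen, f.comm_a, g.comm_a, h]
  · refine basis₂.ext fun ⟨k, b⟩ => ?_
    cases b
    · rw [← fc_fa_gen, f.comm_c, g.comm_c, f.comm_a, g.comm_a, h]
    · rw [← facb_gen, f.comm_facb, g.comm_facb, h]

lemma range_fc_sup_span_facb_gen_last :
    LinearMap.range (Mstring n).fc ⊔ ℂ ∙ (Mstring n).facb (gen (Fin.last n)) = ⊤ := by
  rw [eq_top_iff, ← basis₂.span_eq, Submodule.span_le]
  rintro _ ⟨⟨k, b⟩, rfl⟩
  cases b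
  · exact Submodule.mem_sup_left ⟨_, fc_basis₁_true k⟩
  · cases k using Fin.lastCases with
    | last =>
      rw [← facb_gen]
      exact Submodule.mem_sup_right (Submodule.mem_span_singleton_self _)
    | cast j => exact Submodule.mem_sup_left ⟨_, fc_basis₁_succ_false j⟩

end Mstring

section StandardExtension

/-- Extension by zero from the first `m + 1` blocks of coordinates: both components of the
inclusion `M(acb(c⁻¹acb)ᵐ) → M(acb(c⁻¹acb)ᵐ⁺¹)`. -/
def stdIncl (m : ℕ) : (Fin (m + 1) × Bool → ℂ) →ₗ[ℂ] (Fin (m + 2) × Bool → ℂ) :=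
  Function.ExtendByZero.linearMap ℂ (Prod.map Fin.castSucc id)

/-- Restriction to the last block of coordinates: both components of the projection
`M(acb(c⁻¹acb)ᵐ⁺¹) → M(acb)`. -/
def stdProj (m : ℕ) : (Fin (m + 2) × Bool → ℂ) →ₗ[ℂ] (Fin 1 × Bool → ℂ) :=
  LinearMap.funLeft ℂ ℂ (Prod.map (fun _ => Fin.last (m + 1)) id)

variable {m : ℕ}

lemma prodMap_castSucc_id_injective :
    Function.Injective (Prod.map Fin.castSucc id : Fin (m + 1) × Bool → Fin (m + 2) × Bool) :=
  (Fin.castSucc_injective _).prodMap Function.injective_id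

lemma stdIncl_castSucc (v : Fin (m + 1) × Bool → ℂ) (k : Fin (m + 1)) (b : Bool) :
    stdIncl m v (k.castSucc, b) = v (k, b) :=
  prodMap_castSucc_id_injective.extend_apply v 0 (k, b)

lemma stdIncl_last (v : Fin (m + 1) × Bool → ℂ) (b : Bool) :
    stdIncl m v (Fin.last (m + 1), b) = 0 :=
  Function.extend_apply' v (0 : Fin (m + 2) × Bool → ℂ) _ (by
    rintro ⟨⟨k, _⟩, h⟩
    exact k.castSucc_ne_last (congrArg Prod.fst h))

lemma stdProj_apply (v : Fin (m + 2) × Bool → ℂ) (k : Fin 1) (b : Bool) :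
    stdProj m v (k, b) = v (Fin.last (m + 1), b) := rfl

lemma stdIncl_single (k : Fin (m + 1)) (b : Bool) :
    stdIncl m (Pi.single (k, b) 1) = Pi.single (k.castSucc, b) 1 := by
  funext ⟨j, b'⟩
  cases j using Fin.lastCases with
  | last => simp [stdIncl_last, k.castSucc_ne_last.symm]
  | cast j => simp [stdIncl_castSucc, Pi.single_apply]

lemma stdProj_single_last (b : Bool) :
    stdProj m (Pi.single (Fin.last (m + 1), b) 1) = Pi.single (0, b) 1 := by
  funext ⟨j, b'⟩
  simp [stdProj_apply, Pi.single_apply, Fin.fin_one_eq_zero j]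

lemma stdIncl_injective : Function.Injective (stdIncl m) :=
  Function.extend_injective prodMap_castSucc_id_injective 0

lemma stdProj_surjective : Function.Surjective (stdProj m) :=
  LinearMap.funLeft_surjective_of_injective ℂ ℂ _
    ((Function.injective_of_subsingleton _).prodMap Function.injective_id)

lemma range_stdIncl : LinearMap.range (stdIncl m) = LinearMap.ker (stdProj m) := by
  refine range_extendByZero_eq_ker_funLeft prodMap_castSucc_id_injective (Set.ext fun ⟨j, b⟩ => ?_)
  cases j using Fin.lastCases with
  | last => simp
  | cast j => simp [j.is_le]

lemma stdIncl_strFa (v : Fin (m + 1) × Bool → ℂ) :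
    stdIncl m (strFa m v) = strFa (m + 1) (stdIncl m v) := by
  funext ⟨j, b⟩
  cases j using Fin.lastCases <;> simp [strFa, stdIncl_castSucc, stdIncl_last]

lemma stdIncl_strFc (v : Fin (m + 1) × Bool → ℂ) :
    stdIncl m (strFc m v) = strFc (m + 1) (stdIncl m v) := by
  funext ⟨j, b⟩
  cases b
  · cases j using Fin.lastCases <;> simp [strFc, stdIncl_castSucc, stdIncl_last]
  · cases j using Fin.lastCases with
    | last => rw [stdIncl_last, strFc_last_true]
    | cast j =>
      rw [stdIncl_castSucc, strFc_castSucc_true]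
      cases j using Fin.lastCases with
      | last => rw [strFc_last_true, Fin.succ_last, stdIncl_last]
      | cast j => rw [strFc_castSucc_true, Fin.succ_castSucc, stdIncl_castSucc]

lemma stdProj_strFa (v : Fin (m + 2) × Bool → ℂ) :
    stdProj m (strFa (m + 1) v) = strFa 0 (stdProj m v) := rfl

lemma stdProj_strFc (v : Fin (m + 2) × Bool → ℂ) :
    stdProj m (strFc (m + 1) v) = strFc 0 (stdProj m v) := by
  funext ⟨k, b⟩
  cases b <;> simp [strFc, stdProj_apply]

/-- The standard extension `0 → M(acb(c⁻¹acb)ᵐ) → M(acb(c⁻¹acb)ᵐ⁺¹) → M(acb) → 0`. -/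
def stdSES (m : ℕ) : BSES (Mstring m) (Mstring 0) where
  E := Mstring (m + 1)
  i := ⟨stdIncl m, stdIncl m, stdIncl_strFa, stdIncl_strFa, stdIncl_strFc⟩
  p := ⟨stdProj m, stdProj m, stdProj_strFa, stdProj_strFa, stdProj_strFc⟩
  inj1 := stdIncl_injective
  inj2 := stdIncl_injective
  surj1 := stdProj_surjective
  surj2 := stdProj_surjective
  exact1 := range_stdIncl
  exact2 := range_stdIncl

namespace stdSES

open Mstring

lemma i_gen (k : Fin (m + 1)) :
    (stdSES m).i.g1 (gen k) = (gen k.castSucc : (Mstring (m + 1)).V1) := by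
  rw [gen, gen, basis₁_eq_single, basis₁_eq_single]
  exact stdIncl_single k false

lemma p_gen_castSucc (k : Fin (m + 1)) :
    (stdSES m).p.g1 (gen k.castSucc : (Mstring (m + 1)).V1) = 0 := by
  rw [← i_gen, BSES.p_i_g1]

lemma p_gen_last : (stdSES m).p.g1 (gen (Fin.last (m + 1)) : (Mstring (m + 1)).V1) = gen 0 := by
  rw [gen, gen, basis₁_eq_single, basis₁_eq_single]
  exact stdProj_single_last false

lemma not_isSplit : ¬ (stdSES m).IsSplit := by
  rintro ⟨s, hs, -⟩
  have hu : (stdSES m).E.fc (s.g1 (gen 0)) = 0 := by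
    rw [← s.comm_c, isStringSeq_gen.fc_zero, map_zero]
  have h1 : s.g1 (gen 0) (Fin.last (m + 1), false) = 1 :=
    (congrFun (hs (gen 0)) (0, false)).trans (by rw [gen, basis₁_eq_single, Pi.single_eq_same])
  have h0 : s.g1 (gen 0) (Fin.last (m + 1), false) = 0 :=
    (strFc_castSucc_true _ (Fin.last m)).symm.trans (congrFun hu _)
  exact one_ne_zero (h1.symm.trans h0)

end stdSES

end StandardExtension

namespace BSES

open Mstring

variable {m : ℕ}

lemma isSplit_of_isStringSeq {n : ℕ} {Y : BarbellRep} (ξ : BSES Y (Mstring n))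
    {u : Fin (n + 1) → ξ.E.V1} (hu : IsStringSeq u) (hp : ∀ k, ξ.p.g1 (u k) = gen k) :
    ξ.IsSplit := by
  have h : ξ.p.comp (lift u hu) = BHom.id (Mstring n) :=
    hom_ext fun k => (congrArg ξ.p.g1 (lift_gen u hu k)).trans (hp k)
  exact ⟨lift u hu, LinearMap.congr_fun (congrArg BHom.g1 h),
    LinearMap.congr_fun (congrArg BHom.g2 h)⟩

lemma exists_lift_gen (ξ : BSES (Mstring m) (Mstring 0)) :
    ∃ (u : ξ.E.V1) (β : ℂ), ξ.p.g1 u = gen 0 ∧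
      ξ.E.fc u = β • ξ.i.g2 ((Mstring m).facb (gen (Fin.last m))) := by
  obtain ⟨v, hv⟩ := ξ.surj1 (gen 0)
  obtain ⟨y, hy⟩ : ξ.E.fc v ∈ LinearMap.range ξ.i.g2 := by
    rw [ξ.exact2, LinearMap.mem_ker, ξ.p.comm_c, hv, isStringSeq_gen.fc_zero]
  obtain ⟨_, ⟨x, rfl⟩, _, hβ, rfl⟩ := Submodule.mem_sup.1
    (range_fc_sup_span_facb_gen_last.ge (Submodule.mem_top (x := y)))
  obtain ⟨β, rfl⟩ := Submodule.mem_span_singleton.1 hβ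
  refine ⟨v - ξ.i.g1 x, β, ?_, ?_⟩
  · rw [map_sub, hv, p_i_g1, sub_zero]
  · rw [map_sub, ← hy, ← ξ.i.comm_c, map_add, add_sub_cancel_left, map_smul]

lemma exists_scaledEquiv_stdSES (ξ : BSES (Mstring m) (Mstring 0)) (hξ : ¬ ξ.IsSplit) :
    ∃ β : ℂ, β ≠ 0 ∧ ScaledEquiv β (stdSES m) ξ := by
  obtain ⟨u, β, hpu, hcu⟩ := ξ.exists_lift_gen
  have hβ : β ≠ 0 := by
    rintro rfl
    rw [zero_smul] at hcu
    exact hξ (ξ.isSplit_of_isStringSeq (u := fun _ => u) ⟨hcu, fun j => j.elim0⟩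
      fun k => by rw [hpu, Fin.fin_one_eq_zero k])
  have hw : IsStringSeq (n := m + 1)
      (Fin.snoc (α := fun _ => ξ.E.V1) ((β • ξ.i).g1 ∘ gen) u) :=
    (isStringSeq_gen.map (β • ξ.i)).snoc
      (by rw [Function.comp_apply, ← BHom.comm_facb, BHom.smul_g2_apply, hcu])
  refine ⟨β, hβ, ScaledEquiv.of_hom hβ (lift _ hw) (hom_ext fun k => ?_) (hom_ext fun k => ?_)⟩
  · change (lift _ hw).g1 ((stdSES m).i.g1 (gen k)) = (β • ξ.i).g1 (gen k)
    rw [stdSES.i_gen, lift_gen, Fin.snoc_castSucc, Function.comp_apply]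
  · change ξ.p.g1 ((lift _ hw).g1 (gen k)) = (stdSES m).p.g1 (gen k)
    rw [lift_gen]
    cases k using Fin.lastCases with
    | last => rw [Fin.snoc_last, stdSES.p_gen_last, hpu]
    | cast k =>
      rw [Fin.snoc_castSucc, stdSES.p_gen_castSucc, Function.comp_apply, BHom.smul_g1_apply,
        map_smul, p_i_g1, smul_zero]

lemma repIso_of_not_isSplit (ξ : BSES (Mstring m) (Mstring 0)) (hξ : ¬ ξ.IsSplit) :
    RepIso ξ.E (Mstring (m + 1)) := by
  obtain ⟨β, hβ, h⟩ := ξ.exists_scaledEquiv_stdSES hξ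
  exact (h.symm hβ).repIso

end BSES

lemma extOneDimensional_Mstring (m : ℕ) : ExtOneDimensional (Mstring 0) (Mstring m) := by
  refine ⟨⟨stdSES m, stdSES.not_isSplit⟩, fun ξ₁ ξ₂ hξ₁ hξ₂ => ?_⟩
  obtain ⟨β₁, hβ₁, h₁⟩ := ξ₁.exists_scaledEquiv_stdSES hξ₁
  obtain ⟨β₂, hβ₂, h₂⟩ := ξ₂.exists_scaledEquiv_stdSES hξ₂
  exact ⟨β₁⁻¹ * β₂, mul_ne_zero (inv_ne_zero hβ₁) hβ₂, (h₁.symm hβ₁).trans h₂⟩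

theorem barbell_self_extension_of_Macb_general (m : ℕ) :
    (∃ ξ : BSES (Mstring m) (Mstring 0), ¬ ξ.IsSplit ∧ RepIso ξ.E (Mstring (m + 1))) ∧
    ExtOneDimensional (Mstring 0) (Mstring m) ∧
    (∀ ξ : BSES (Mstring m) (Mstring 0), ¬ ξ.IsSplit → RepIso ξ.E (Mstring (m + 1))) :=
  ⟨⟨stdSES m, stdSES.not_isSplit, (stdSES m).repIso_of_not_isSplit stdSES.not_isSplit⟩,
    extOneDimensional_Mstring m, BSES.repIso_of_not_isSplit⟩

/-- There is a non-split short exact sequence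
`0 → M(acb) → M(acbc⁻¹acb) → M(acb) → 0`; the Yoneda extension group
`Ext¹(M(acb), M(acb))` is one-dimensional over `ℂ`; and consequently every non-split
self-extension of `M(acb)` has middle term isomorphic to `M(acbc⁻¹acb)`. -/
theorem barbell_self_extension_of_Macb :
    (∃ ξ : BSES (Mstring 0) (Mstring 0), ¬ ξ.IsSplit ∧ RepIso ξ.E (Mstring 1)) ∧
    ExtOneDimensional (Mstring 0) (Mstring 0) ∧
    (∀ ξ : BSES (Mstring 0) (Mstring 0), ¬ ξ.IsSplit → RepIso ξ.E (Mstring 1)) :=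
  barbell_self_extension_of_Macb_general 0
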